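/- Let σ ⊆ ℝ³ be a 3-dimensional strictly convex polyhedral cone and let ρ ∈ σ(1) be any ray of σ. Then σ is a pyramidal extension of σ' by ρ, where σ' is the cone generated by the union of the rays of σ other than ρ. (In particular, in any fan of strictly convex polyhedral cones in ℝ³, every ray is in Egyptian position.) -/

import Mathlib

/-!
Work with an irredundant finite generating set `t` of `σ`. By strict convexity, the line through a
generator misses the convex hull of the others, so Hahn–Banach gives a functional vanishing on that
generator and positive on the others (`exists_exposing`). Consequently the rays of `σ` are exactly
the half-lines through the members of `t`, and if `ρ` is the ray of `u ∈ t`, then `σ'` is the cone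
over `S = t \ {u}` (`primeCone_eq`). Removing one generator lowers the dimension by at most one, so
`dim σ'` is `2` or `3`; only the second case needs an argument.

*A facet seen from `u`* (`exists_facet_functional`). Subtracting a small functional from the one
exposing `u` gives `m ≥ 0` on `S` with `m u < 0`. As long as the members of `S` killed by `m` span
less than a plane, some nonzero functional vanishes on them and at `u`; tilting `m` along it until
it kills a further member of `S` keeps `m u < 0` and enlarges the span
(`exists_more_tight`). At the end `m` cuts out a facet `η` containing two independent generators
`a`, `b`.

*No other facet is seen from `u`* (`exists_decomposition`). Let `A`, `B` be functionals exposing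
`a`, `b` in `σ`. In the basis dual to `(u, a, b)` the signs are `m = (-, 0, 0)`, `A = (+, 0, +)`,
`B = (+, +, 0)`. Hence a nonzero `m'` with `m' u ≤ 0` that is nonnegative on `S` is `αA + βB + km`
with `α, β ≥ 0` and `k > 0`. All three summands are nonnegative on `σ'`, so `m` vanishes wherever
`m'` does on `σ'`; if `m'` cuts out a facet, that facet lies in `η`, and so equals it.
-/

open Pointwise

/-- Ambient space `ℝⁿ`. -/
abbrev V (n : ℕ) := Fin n → ℝ

/-- The polyhedral cone generated by a finite set of vectors:
all nonnegative linear combinations. -/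
def coneOf {n : ℕ} (s : Finset (V n)) : Set (V n) :=
  {x | ∃ c : V n → ℝ, (∀ v, 0 ≤ c v) ∧ x = ∑ v ∈ s, c v • v}

/-- A polyhedral cone: the cone generated by finitely many vectors. -/
def IsPolyhedralCone {n : ℕ} (σ : Set (V n)) : Prop :=
  ∃ s : Finset (V n), σ = coneOf s

/-- A cone is strictly convex if `σ ∩ (−σ) = {0}`. -/
def IsStrictlyConvexCone {n : ℕ} (σ : Set (V n)) : Prop :=
  σ ∩ (-σ) = {0}

/-- `τ` is a face of `σ`: cut out on `σ` by a linear functional nonnegative on `σ`. -/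
def IsFaceOf {n : ℕ} (τ σ : Set (V n)) : Prop :=
  ∃ m : V n →ₗ[ℝ] ℝ, (∀ x ∈ σ, 0 ≤ m x) ∧ τ = {x ∈ σ | m x = 0}

/-- The dimension of a cone: the dimension of its linear span. -/
noncomputable def dimCone {n : ℕ} (σ : Set (V n)) : ℕ :=
  Module.finrank ℝ (Submodule.span ℝ σ)

/-- The ray `ℝ_{≥0}·x`. -/
def rayGen {n : ℕ} (x : V n) : Set (V n) :=
  {y | ∃ c : ℝ, 0 ≤ c ∧ y = c • x}

/-- The set `σ(1)` of rays (one-dimensional faces) of `σ`. -/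
def raysOf {n : ℕ} (σ : Set (V n)) : Set (Set (V n)) :=
  {ρ | IsFaceOf ρ σ ∧ dimCone ρ = 1}

/-- `η` is a facet of `σ`: a face of dimension `dim σ − 1`. -/
def IsFacetOf {n : ℕ} (η σ : Set (V n)) : Prop :=
  IsFaceOf η σ ∧ dimCone η = dimCone σ - 1

/-- The cone hull of an arbitrary set: all nonnegative combinations of
finitely many of its elements. -/
def coneHull {n : ℕ} (s : Set (V n)) : Set (V n) :=
  {x | ∃ t : Finset (V n), ↑t ⊆ s ∧
    ∃ c : V n → ℝ, (∀ v, 0 ≤ c v) ∧ x = ∑ v ∈ t, c v • v}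

/-- `σ'`: the cone generated by the union of the rays of `σ` other than `ρ`. -/
def primeCone {n : ℕ} (σ ρ : Set (V n)) : Set (V n) :=
  coneHull (⋃ ρ' ∈ raysOf σ \ {ρ}, ρ')

/-- `x` is beneath the supporting hyperplane `H_η` of the facet `η` of `κ`:
every witnessing functional is positive at `x`. -/
def Beneath {n : ℕ} (κ η : Set (V n)) (x : V n) : Prop :=
  ∀ m : V n →ₗ[ℝ] ℝ, (∀ y ∈ κ, 0 ≤ m y) → η = {y ∈ κ | m y = 0} → 0 < m x

/-- `x` is beyond the supporting hyperplane `H_η` of the facet `η` of `κ`: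
every witnessing functional is negative at `x`. -/
def Beyond {n : ℕ} (κ η : Set (V n)) (x : V n) : Prop :=
  ∀ m : V n →ₗ[ℝ] ℝ, (∀ y ∈ κ, 0 ≤ m y) → η = {y ∈ κ | m y = 0} → m x < 0

/-- `σ` (an `n`-dimensional cone in `ℝⁿ`) is a pyramidal extension of `σ'` by the
ray `ρ`, where `σ'` is the cone generated by the rays of `σ` other than `ρ`:
either `dim σ' = n − 1`, or `dim σ' = n` and there is precisely one facet `η` of
`σ'` such that the nonzero points of `ρ` are beyond `H_η`, while they are beneath
`H_{η'}` for every other facet `η'` of `σ'`. -/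
def IsPyramidalExtensionBy {n : ℕ} (σ ρ : Set (V n)) : Prop :=
  dimCone (primeCone σ ρ) = n - 1 ∨
  (dimCone (primeCone σ ρ) = n ∧
    ∃ η, IsFacetOf η (primeCone σ ρ) ∧
      (∀ x ∈ ρ, x ≠ 0 → Beyond (primeCone σ ρ) η x) ∧
      (∀ η', IsFacetOf η' (primeCone σ ρ) → η' ≠ η →
        ∀ x ∈ ρ, x ≠ 0 → Beneath (primeCone σ ρ) η' x))

/-- A fan in `ℝⁿ`: a finite collection of strictly convex polyhedral cones closed
under taking faces, in which any two cones intersect in a common face. -/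
def IsFan {n : ℕ} (Δ : Set (Set (V n))) : Prop :=
  Δ.Finite ∧
  (∀ σ ∈ Δ, IsPolyhedralCone σ ∧ IsStrictlyConvexCone σ) ∧
  (∀ σ ∈ Δ, ∀ τ, IsFaceOf τ σ → τ ∈ Δ) ∧
  (∀ σ ∈ Δ, ∀ τ ∈ Δ, IsFaceOf (σ ∩ τ) σ ∧ IsFaceOf (σ ∩ τ) τ)

/-! ### Generators and rays of a strictly convex polyhedral cone -/

section Generators

variable {n : ℕ}

lemma coneOf_add {s : Finset (V n)} {x y : V n} (hx : x ∈ coneOf s) (hy : y ∈ coneOf s) :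
    x + y ∈ coneOf s := by
  obtain ⟨c, hc, rfl⟩ := hx
  obtain ⟨d, hd, rfl⟩ := hy
  exact ⟨fun v => c v + d v, fun v => add_nonneg (hc v) (hd v), by
    simp [add_smul, Finset.sum_add_distrib]⟩

lemma coneOf_smul {s : Finset (V n)} {x : V n} {a : ℝ} (ha : 0 ≤ a) (hx : x ∈ coneOf s) :
    a • x ∈ coneOf s := by
  obtain ⟨c, hc, rfl⟩ := hx
  exact ⟨fun v => a * c v, fun v => mul_nonneg ha (hc v), by
    simp [Finset.smul_sum, smul_smul]⟩

lemma zero_mem_coneOf (s : Finset (V n)) : (0 : V n) ∈ coneOf s :=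
  ⟨fun _ => 0, fun _ => le_rfl, by simp⟩

lemma mem_coneOf_of_mem {s : Finset (V n)} {v : V n} (hv : v ∈ s) : v ∈ coneOf s := by
  classical
  refine ⟨fun w => if w = v then 1 else 0, fun w => by dsimp only; split_ifs <;> norm_num, ?_⟩
  simp [ite_smul, hv]

lemma coneOf_sum {ι : Type*} {s : Finset (V n)} (t : Finset ι) (f : ι → V n)
    (h : ∀ i ∈ t, f i ∈ coneOf s) : ∑ i ∈ t, f i ∈ coneOf s :=
  Finset.sum_induction f (· ∈ coneOf s) (fun _ _ => coneOf_add) (zero_mem_coneOf s) h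

lemma coneOf_subset {s t : Finset (V n)} (h : ∀ v ∈ s, v ∈ coneOf t) : coneOf s ⊆ coneOf t := by
  rintro x ⟨c, hc, rfl⟩
  exact coneOf_sum _ _ fun v hv => coneOf_smul (hc v) (h v hv)

lemma nonneg_on_coneOf {s : Finset (V n)} {m : V n →ₗ[ℝ] ℝ} (h : ∀ v ∈ s, 0 ≤ m v) :
    ∀ x ∈ coneOf s, 0 ≤ m x := by
  rintro x ⟨c, hc, rfl⟩
  rw [map_sum]
  exact Finset.sum_nonneg fun v hv => by
    simpa using mul_nonneg (hc v) (h v hv)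

lemma span_coneOf (s : Finset (V n)) :
    Submodule.span ℝ (coneOf s) = Submodule.span ℝ (s : Set (V n)) := by
  apply le_antisymm
  · rw [Submodule.span_le]
    rintro x ⟨c, hc, rfl⟩
    exact Submodule.sum_mem _ fun v hv => Submodule.smul_mem _ _ (Submodule.subset_span hv)
  · exact Submodule.span_mono fun v hv => mem_coneOf_of_mem hv

/-- In a nonnegative combination killed by `m ≥ 0`, only generators killed by `m` occur. -/
lemma coeff_of_eval_eq_zero {s : Finset (V n)} {m : V n →ₗ[ℝ] ℝ} (h : ∀ v ∈ s, 0 ≤ m v)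
    {c : V n → ℝ} (hc : ∀ v, 0 ≤ c v) (h0 : m (∑ v ∈ s, c v • v) = 0) :
    ∀ v ∈ s, c v = 0 ∨ m v = 0 := by
  intro v hv
  rw [map_sum, Finset.sum_eq_zero_iff_of_nonneg] at h0
  · simpa using h0 v hv
  · intro w hw
    simpa using mul_nonneg (hc w) (h w hw)

lemma span_face {s : Finset (V n)} {m : V n →ₗ[ℝ] ℝ} (h : ∀ v ∈ s, 0 ≤ m v) :
    Submodule.span ℝ {x ∈ coneOf s | m x = 0} = Submodule.span ℝ {v | v ∈ s ∧ m v = 0} := by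
  apply le_antisymm
  · rw [Submodule.span_le]
    rintro x ⟨⟨c, hc, rfl⟩, h0⟩
    refine Submodule.sum_mem _ fun v hv => ?_
    rcases coeff_of_eval_eq_zero h hc h0 v hv with h1 | h1
    · simp [h1]
    · exact Submodule.smul_mem _ _ (Submodule.subset_span ⟨hv, h1⟩)
  · exact Submodule.span_mono fun v hv => ⟨mem_coneOf_of_mem hv.1, hv.2⟩

/-- Every finitely generated cone has an irredundant finite generating set. -/
lemma exists_irredundant (s : Finset (V n)) :
    ∃ t : Finset (V n), coneOf t = coneOf s ∧ ∀ v ∈ t, v ∉ coneOf (t.erase v) := by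
  classical
  induction s using Finset.strongInduction with
  | H s ih =>
    by_cases hs : ∀ v ∈ s, v ∉ coneOf (s.erase v)
    · exact ⟨s, rfl, hs⟩
    · push Not at hs
      obtain ⟨v, hv, hvs⟩ := hs
      obtain ⟨t, ht, hirr⟩ := ih _ (Finset.erase_ssubset hv)
      refine ⟨t, ht.trans (Set.Subset.antisymm ?_ ?_), hirr⟩
      · exact coneOf_subset fun w hw => mem_coneOf_of_mem (Finset.mem_of_mem_erase hw)
      · refine coneOf_subset fun w hw => ?_
        by_cases hwv : w = v
        · exact hwv ▸ hvs
        · exact mem_coneOf_of_mem (Finset.mem_erase.2 ⟨hwv, hw⟩)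

/-- An irredundant generator of a strictly convex cone is exposed: some functional vanishes on it
and is positive on all the other generators. It comes from separating the line through the
generator from the (compact) convex hull of the other generators. -/
lemma exists_exposing {t : Finset (V n)} (hconv : IsStrictlyConvexCone (coneOf t))
    (hirr : ∀ v ∈ t, v ∉ coneOf (t.erase v)) {v : V n} (hv : v ∈ t) :
    ∃ m : V n →ₗ[ℝ] ℝ, m v = 0 ∧ ∀ w ∈ t, w ≠ v → 0 < m w := by
  classical
  have hdisj : Disjoint (convexHull ℝ ((t.erase v : Finset (V n)) : Set (V n)))
      (Submodule.span ℝ {v} : Set (V n)) := by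
    rw [Set.disjoint_left]
    intro x hx hxv
    obtain ⟨c, hc0, hc1, hcx⟩ := (Finset.mem_convexHull' (R := ℝ)).1 hx
    obtain ⟨a, rfl⟩ := Submodule.mem_span_singleton.1 hxv
    have hmem : a • v ∈ coneOf (t.erase v) := by
      rw [← hcx]
      exact coneOf_sum _ _ fun w hw => coneOf_smul (hc0 w hw) (mem_coneOf_of_mem hw)
    rcases lt_or_ge 0 a with ha | ha
    · apply hirr v hv
      simpa [smul_smul, ha.ne'] using coneOf_smul (inv_nonneg.2 ha.le) hmem
    · obtain ⟨w, hw, hcw⟩ : ∃ w ∈ t.erase v, 0 < c w := by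
        by_contra! h
        have := Finset.sum_nonpos h
        linarith
      have hwt := Finset.mem_of_mem_erase hw
      have hneg : -(c w • w) ∈ coneOf t := by
        have hsum : -(c w • w) = ∑ y ∈ (t.erase v).erase w, c y • y + (-a) • v := by
          have := Finset.add_sum_erase (t.erase v) (fun y => c y • y) hw
          rw [hcx] at this
          rw [neg_smul, ← this]
          abel
        rw [hsum]
        refine coneOf_add (coneOf_sum _ _ fun y hy => ?_)
          (coneOf_smul (by linarith) (mem_coneOf_of_mem hv))
        have hy' := Finset.mem_of_mem_erase hy
        exact coneOf_smul (hc0 y hy') (mem_coneOf_of_mem (Finset.mem_of_mem_erase hy'))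
      have h0 : c w • w ∈ coneOf t ∩ -coneOf t :=
        ⟨coneOf_smul hcw.le (mem_coneOf_of_mem hwt), hneg⟩
      rw [hconv] at h0
      have hw0 : w = 0 := by
        rcases smul_eq_zero.1 h0 with h | h
        · exact absurd h hcw.ne'
        · exact h
      exact hirr w hwt (hw0 ▸ zero_mem_coneOf _)
  obtain ⟨f, a, b, hfa, hab, hfb⟩ := geometric_hahn_banach_compact_closed
    (convex_convexHull ℝ _) ((Finset.finite_toSet _).isCompact_convexHull (𝕜 := ℝ))
    (Submodule.span ℝ {v}).convex (Submodule.closed_of_finiteDimensional _) hdisj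
  have hb : b < 0 := by simpa using hfb 0 (Submodule.zero_mem _)
  have hfv : f v = 0 := by
    by_contra hne
    -- a functional bounded below on a line vanishes on it
    have := hfb ((b / f v) • v) (Submodule.smul_mem _ _ (Submodule.mem_span_singleton_self v))
    simp [hne] at this
  refine ⟨-(f : V n →ₗ[ℝ] ℝ), by simp [hfv], fun w hw hwv => ?_⟩
  have := hfa w (subset_convexHull ℝ _ (Finset.mem_coe.2 (Finset.mem_erase.2 ⟨hwv, hw⟩)))
  simp only [LinearMap.neg_apply, ContinuousLinearMap.coe_coe]
  linarith

/-- A finite set of nonzero vectors, each of which is the only member of the set killed by some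
functional that is nonnegative on the set. -/
def IsExposedSet (t : Finset (V n)) : Prop :=
  ∀ v ∈ t, v ≠ 0 ∧ ∃ m : V n →ₗ[ℝ] ℝ, m v = 0 ∧ ∀ w ∈ t, w ≠ v → 0 < m w

lemma exists_exposedSet {σ : Set (V n)} (hpoly : IsPolyhedralCone σ)
    (hconv : IsStrictlyConvexCone σ) :
    ∃ t : Finset (V n), σ = coneOf t ∧ IsExposedSet t := by
  obtain ⟨s, rfl⟩ := hpoly
  obtain ⟨t, ht, hirr⟩ := exists_irredundant s
  refine ⟨t, ht.symm, fun v hv => ⟨?_, exists_exposing (ht ▸ hconv) hirr hv⟩⟩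
  rintro rfl
  exact hirr _ hv (zero_mem_coneOf _)

lemma dimCone_rayGen {v : V n} (hv : v ≠ 0) : dimCone (rayGen v) = 1 := by
  have : Submodule.span ℝ (rayGen v) = Submodule.span ℝ {v} := by
    apply le_antisymm
    · rw [Submodule.span_le]
      rintro x ⟨c, -, rfl⟩
      exact Submodule.smul_mem _ _ (Submodule.mem_span_singleton_self v)
    · exact Submodule.span_mono (Set.singleton_subset_iff.2 ⟨1, zero_le_one, by simp⟩)
  rw [dimCone, this, finrank_span_singleton hv]

lemma rayGen_mem_raysOf {t : Finset (V n)} (ht : IsExposedSet t) {v : V n} (hv : v ∈ t) :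
    rayGen v ∈ raysOf (coneOf t) := by
  obtain ⟨hv0, m, hmv, hm⟩ := ht v hv
  have hm0 : ∀ w ∈ t, 0 ≤ m w := fun w hw => by
    by_cases h : w = v
    · rw [h, hmv]
    · exact (hm w hw h).le
  refine ⟨⟨m, nonneg_on_coneOf hm0, Set.Subset.antisymm ?_ ?_⟩, dimCone_rayGen hv0⟩
  · rintro x ⟨c, hc, rfl⟩
    exact ⟨coneOf_smul hc (mem_coneOf_of_mem hv), by simp [hmv]⟩
  · rintro x ⟨⟨c, hc, rfl⟩, h0⟩
    refine ⟨c v, hc v, Finset.sum_eq_single_of_mem v hv fun w hw hwv => ?_⟩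
    rcases coeff_of_eval_eq_zero hm0 hc h0 w hw with h | h
    · simp [h]
    · exact absurd h (hm w hw hwv).ne'

/-- Conversely, every ray is generated by one of the exposed generators. -/
lemma exists_eq_rayGen {t : Finset (V n)} (ht : IsExposedSet t)
    {ρ : Set (V n)} (hρ : ρ ∈ raysOf (coneOf t)) : ∃ v ∈ t, ρ = rayGen v := by
  obtain ⟨⟨m, hm, rfl⟩, hd⟩ := hρ
  have hm0 : ∀ w ∈ t, 0 ≤ m w := fun w hw => hm w (mem_coneOf_of_mem hw)
  rw [dimCone, span_face hm0] at hd
  obtain ⟨v, hv, hmv⟩ : {v | v ∈ t ∧ m v = 0}.Nonempty := by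
    by_contra h
    rw [Set.not_nonempty_iff_eq_empty.1 h] at hd
    rw [Submodule.span_empty, finrank_bot] at hd
    exact zero_ne_one hd
  obtain ⟨hv0, p, hpv, hp⟩ := ht v hv
  have hspan : Submodule.span ℝ {v} = Submodule.span ℝ {v | v ∈ t ∧ m v = 0} :=
    Submodule.eq_of_le_of_finrank_eq
      (Submodule.span_mono (Set.singleton_subset_iff.2 ⟨hv, hmv⟩))
      (by rw [finrank_span_singleton hv0, hd])
  -- a second generator in the face would be a multiple of `v`, hence killed by `p`
  have huniq : ∀ w ∈ t, m w = 0 → w = v := by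
    intro w hw hmw
    by_contra hwv
    have hmem : w ∈ Submodule.span ℝ {v} := hspan ▸ Submodule.subset_span ⟨hw, hmw⟩
    obtain ⟨a, rfl⟩ := Submodule.mem_span_singleton.1 hmem
    simpa [hpv] using hp _ hw hwv
  refine ⟨v, hv, Set.Subset.antisymm ?_ ?_⟩
  · rintro x ⟨⟨c, hc, rfl⟩, h0⟩
    refine ⟨c v, hc v, Finset.sum_eq_single_of_mem v hv fun w hw hwv => ?_⟩
    rcases coeff_of_eval_eq_zero hm0 hc h0 w hw with h | h
    · simp [h]
    · exact absurd (huniq w hw h) hwv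
  · rintro x ⟨c, hc, rfl⟩
    exact ⟨coneOf_smul hc (mem_coneOf_of_mem hv), by simp [hmv]⟩

lemma primeCone_eq {t : Finset (V n)} (ht : IsExposedSet t) {u : V n} (hu : u ∈ t) :
    primeCone (coneOf t) (rayGen u) = coneOf (t.erase u) := by
  classical
  apply Set.Subset.antisymm
  · rintro x ⟨s, hs, c, hc, rfl⟩
    refine coneOf_sum _ _ fun y hy => coneOf_smul (hc y) ?_
    obtain ⟨ρ', ⟨hρ', hne⟩, hyρ⟩ := Set.mem_iUnion₂.1 (hs hy)
    obtain ⟨v, hv, rfl⟩ := exists_eq_rayGen ht hρ'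
    obtain ⟨d, hd, rfl⟩ := hyρ
    refine coneOf_smul hd (mem_coneOf_of_mem (Finset.mem_erase.2 ⟨?_, hv⟩))
    rintro rfl
    exact hne rfl
  · rintro x ⟨c, hc, rfl⟩
    refine ⟨t.erase u, fun v hv => ?_, c, hc, rfl⟩
    obtain ⟨hvu, hvt⟩ := Finset.mem_erase.1 (Finset.mem_coe.1 hv)
    refine Set.mem_iUnion₂.2 ⟨rayGen v, ⟨rayGen_mem_raysOf ht hvt, fun h => ?_⟩,
      ⟨1, zero_le_one, by simp⟩⟩
    obtain ⟨-, p, hpu, hp⟩ := ht u hu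
    obtain ⟨a, -, ha⟩ : v ∈ rayGen u := Set.mem_singleton_iff.1 h ▸ ⟨1, zero_le_one, by simp⟩
    have := hp v hvt hvu
    rw [ha] at this
    simp [hpu] at this

end Generators

/-! ### Facets of the cone over the remaining generators in `ℝ³` -/

section Space

lemma exists_pair_of_finrank_span_eq_two {T : Set (V 3)}
    (h : Module.finrank ℝ (Submodule.span ℝ T) = 2) :
    ∃ a ∈ T, ∃ b ∈ T, LinearIndependent ℝ ![a, b] := by
  obtain ⟨f, hf, hli⟩ : ∃ f : Fin (Module.finrank ℝ (Submodule.span ℝ T)) → V 3,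
      (∀ i, f i ∈ T) ∧ LinearIndependent ℝ f := by
    obtain ⟨f, hf, -, hli⟩ := Submodule.exists_fun_fin_finrank_span_eq ℝ T
    exact ⟨f, hf, hli⟩
  revert f
  rw [h]
  intro f hf hli
  refine ⟨f 0, hf 0, f 1, hf 1, ?_⟩
  have : f = ![f 0, f 1] := by
    ext i
    fin_cases i <;> rfl
  exact this ▸ hli

lemma functional_ext {u a b : V 3} {m : V 3 →ₗ[ℝ] ℝ} (hu : m u ≠ 0) (ha : m a = 0) (hb : m b = 0)
    (hab : LinearIndependent ℝ ![a, b]) {f g : V 3 →ₗ[ℝ] ℝ} (hfu : f u = g u) (hfa : f a = g a)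
    (hfb : f b = g b) : f = g := by
  have hli : LinearIndependent ℝ ![u, a, b] := by
    refine linearIndependent_finCons.2 ⟨hab, fun hmem => hu ?_⟩
    have hle : Submodule.span ℝ (Set.range ![a, b]) ≤ LinearMap.ker m := by
      rw [Submodule.span_le]
      rintro _ ⟨i, rfl⟩
      fin_cases i
      · exact ha
      · exact hb
    exact hle hmem
  refine (basisOfLinearIndependentOfCardEqFinrank hli (by simp)).ext fun i => ?_
  rw [coe_basisOfLinearIndependentOfCardEqFinrank]
  fin_cases i
  · exact hfu
  · exact hfa
  · exact hfb

/-- If `u` lies beyond the plane `m = 0` spanned by the generators `a`, `b`, then any nonzero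
functional that is nonnegative at `a`, `b` and nonpositive at `u` is a positive multiple of `m` plus
a nonnegative combination `p` of the functionals exposing `a` and `b`. -/
lemma exists_decomposition {t : Finset (V 3)} (ht : IsExposedSet t) {u a b : V 3}
    (hu : u ∈ t) (ha : a ∈ t) (hb : b ∈ t) (hau : a ≠ u) (hbu : b ≠ u)
    (hab : LinearIndependent ℝ ![a, b]) {m m' : V 3 →ₗ[ℝ] ℝ}
    (hmu : m u < 0) (hma : m a = 0) (hmb : m b = 0)
    (hmu' : m' u ≤ 0) (hma' : 0 ≤ m' a) (hmb' : 0 ≤ m' b) (hne : m' ≠ 0) :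
    ∃ p : V 3 →ₗ[ℝ] ℝ, ∃ k : ℝ, (∀ v ∈ t, 0 ≤ p v) ∧ 0 < k ∧ m' = p + k • m := by
  have hba : b ≠ a := by
    rintro rfl
    exact absurd (hab.injective (a₁ := 0) (a₂ := 1) rfl) (by decide)
  obtain ⟨-, A, hAa, hA⟩ := ht a ha
  obtain ⟨-, B, hBb, hB⟩ := ht b hb
  have hA0 : ∀ v ∈ t, 0 ≤ A v := fun v hv => by
    by_cases h : v = a
    · rw [h, hAa]
    · exact (hA v hv h).le
  have hB0 : ∀ v ∈ t, 0 ≤ B v := fun v hv => by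
    by_cases h : v = b
    · rw [h, hBb]
    · exact (hB v hv h).le
  have hAb := hA b hb hba
  have hAu := hA u hu hau.symm
  have hBa := hB a ha hba.symm
  have hBu := hB u hu hbu.symm
  -- the coefficients are forced by the values at `b`, `a` and `u`
  set α := m' b / A b with hα
  set β := m' a / B a with hβ
  have hα0 : 0 ≤ α := div_nonneg hmb' hAb.le
  have hβ0 : 0 ≤ β := div_nonneg hma' hBa.le
  have hk0 : m' u - α * A u - β * B u ≤ 0 := by
    nlinarith [mul_nonneg hα0 hAu.le, mul_nonneg hβ0 hBu.le]
  have heq : m' = (α • A + β • B) + ((m' u - α * A u - β * B u) / m u) • m := by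
    apply functional_ext hmu.ne hma hmb hab
    · simp [hmu.ne]
    · simp [hma, hAa, hβ, hBa.ne']
    · simp [hmb, hBb, hα, hAb.ne']
  refine ⟨α • A + β • B, _, fun v hv => ?_, ?_, heq⟩
  · simpa using add_nonneg (mul_nonneg hα0 (hA0 v hv)) (mul_nonneg hβ0 (hB0 v hv))
  · refine div_pos_of_neg_of_neg (hk0.lt_of_ne fun h0 => hne ?_) hmu
    have h1 := mul_nonneg hα0 hAu.le
    have h2 := mul_nonneg hβ0 hBu.le
    have hα1 : α = 0 := by
      have : α * A u = 0 := by linarith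
      exact (mul_eq_zero.1 this).resolve_right hAu.ne'
    have hβ1 : β = 0 := by
      have : β * B u = 0 := by linarith
      exact (mul_eq_zero.1 this).resolve_right hBu.ne'
    rw [heq, h0, hα1, hβ1]
    simp

/-- If a functional nonnegative on `S` and negative at `u` vanishes on too few elements of `S`, it
can be tilted, keeping its value at `u`, until it vanishes on a new element of `S`. -/
lemma exists_more_tight {S : Finset (V 3)} (hS : Submodule.span ℝ (S : Set (V 3)) = ⊤) {u : V 3}
    {m : V 3 →ₗ[ℝ] ℝ} (hm : ∀ v ∈ S, 0 ≤ m v) (hu : m u < 0)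
    (hlt : Module.finrank ℝ (Submodule.span ℝ {v | v ∈ S ∧ m v = 0}) < 2) :
    ∃ m' : V 3 →ₗ[ℝ] ℝ, (∀ v ∈ S, 0 ≤ m' v) ∧ m' u < 0 ∧
      Module.finrank ℝ (Submodule.span ℝ {v | v ∈ S ∧ m v = 0}) <
        Module.finrank ℝ (Submodule.span ℝ {v | v ∈ S ∧ m' v = 0}) := by
  classical
  set Z := Submodule.span ℝ {v | v ∈ S ∧ m v = 0} with hZ
  have hproper : Z ⊔ Submodule.span ℝ {u} < ⊤ := by
    refine lt_top_iff_ne_top.2 fun h => ?_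
    have h1 := Submodule.finrank_add_le_finrank_add_finrank Z (Submodule.span ℝ {u})
    have h2 := finrank_span_singleton (K := ℝ) (v := u) (by rintro rfl; simp at hu)
    rw [h, finrank_top, h2] at h1
    simp at h1
    omega
  obtain ⟨d, hd0, hd⟩ := Submodule.exists_le_ker_of_lt_top _ hproper
  have hdu : d u = 0 := hd (Submodule.mem_sup_right (Submodule.mem_span_singleton_self u))
  have hdZ : Z ≤ LinearMap.ker d := le_sup_left.trans hd
  obtain ⟨e, heu, heZ, s, hs, hes⟩ : ∃ e : V 3 →ₗ[ℝ] ℝ, e u = 0 ∧ Z ≤ LinearMap.ker e ∧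
      ∃ s ∈ S, e s < 0 := by
    obtain ⟨s, hs, hds⟩ : ∃ s ∈ S, d s ≠ 0 := by
      by_contra! h
      refine hd0 (LinearMap.ext_on hS fun v hv => ?_)
      simpa using h v hv
    rcases lt_or_gt_of_ne hds with h | h
    · exact ⟨d, hdu, hdZ, s, hs, h⟩
    · refine ⟨-d, by simp [hdu], fun x hx => ?_, s, hs, by simpa using h⟩
      have : d x = 0 := hdZ hx
      simp [this]
  obtain ⟨w, hw, hwmin⟩ := (S.filter fun v => e v < 0).exists_min_image
    (fun v => m v / (-e v)) ⟨s, Finset.mem_filter.2 ⟨hs, hes⟩⟩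
  obtain ⟨hwS, hew⟩ := Finset.mem_filter.1 hw
  -- tilt as far as nonnegativity on `S` allows
  set τ := m w / (-e w) with hτ
  have hτ0 : 0 ≤ τ := div_nonneg (hm w hwS) (by linarith)
  have hw0 : (m + τ • e) w = 0 := by
    have : τ * -e w = m w := div_mul_cancel₀ _ (by linarith)
    simp
    linarith
  refine ⟨m + τ • e, fun v hv => ?_, by simpa [heu] using hu, ?_⟩
  · simp only [LinearMap.add_apply, LinearMap.smul_apply, smul_eq_mul]
    rcases lt_or_ge (e v) 0 with h | h
    · have := hwmin v (Finset.mem_filter.2 ⟨hv, h⟩)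
      rw [le_div_iff₀ (by linarith)] at this
      linarith
    · exact add_nonneg (hm v hv) (mul_nonneg hτ0 h)
  · apply Submodule.finrank_lt_finrank_of_lt
    rw [SetLike.lt_iff_le_and_exists]
    refine ⟨Submodule.span_mono fun v hv => ⟨hv.1, ?_⟩, w, Submodule.subset_span ⟨hwS, hw0⟩,
      fun hwZ => hew.ne (heZ hwZ)⟩
    have : e v = 0 := heZ (Submodule.subset_span hv)
    simp [hv.2, this]

lemma exists_facet_functional {t : Finset (V 3)} (ht : IsExposedSet t) {u : V 3} (hu : u ∈ t)
    (hS : Submodule.span ℝ ((t.erase u : Finset (V 3)) : Set (V 3)) = ⊤) :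
    ∃ m : V 3 →ₗ[ℝ] ℝ, (∀ v ∈ t.erase u, 0 ≤ m v) ∧ m u < 0 ∧
      Module.finrank ℝ (Submodule.span ℝ {v | v ∈ t.erase u ∧ m v = 0}) = 2 := by
  classical
  obtain ⟨hu0, p, hpu, hp⟩ := ht u hu
  -- some functional separates `u` from the other generators
  obtain ⟨m₀, hm₀, hm₀u⟩ : ∃ m : V 3 →ₗ[ℝ] ℝ, (∀ v ∈ t.erase u, 0 ≤ m v) ∧ m u < 0 := by
    obtain ⟨g, hg⟩ : ∃ g : V 3 →ₗ[ℝ] ℝ, 0 < g u := by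
      obtain ⟨i, hi⟩ := Function.ne_iff.1 hu0
      refine ⟨u i • LinearMap.proj i, ?_⟩
      simpa using mul_self_pos.2 hi
    -- a large multiple of the functional exposing `u` absorbs `-g` on the other generators
    obtain ⟨N, hN⟩ : ∃ N : ℝ, ∀ v ∈ t.erase u, g v / p v ≤ N := by
      obtain ⟨N, hN⟩ := ((t.erase u).image fun v => g v / p v).bddAbove
      exact ⟨N, fun v hv => hN (Finset.mem_coe.2 (Finset.mem_image_of_mem _ hv))⟩
    refine ⟨N • p - g, fun v hv => ?_, by simpa [hpu] using hg⟩
    obtain ⟨hvu, hvt⟩ := Finset.mem_erase.1 hv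
    have := (div_le_iff₀ (hp v hvt hvu)).1 (hN v hv)
    simpa using this
  have key : ∀ k ≤ 2, ∃ m : V 3 →ₗ[ℝ] ℝ, (∀ v ∈ t.erase u, 0 ≤ m v) ∧ m u < 0 ∧
      k ≤ Module.finrank ℝ (Submodule.span ℝ {v | v ∈ t.erase u ∧ m v = 0}) := by
    intro k
    induction k with
    | zero => exact fun _ => ⟨m₀, hm₀, hm₀u, Nat.zero_le _⟩
    | succ k ih =>
      intro hk
      obtain ⟨m, hm, hmu, hmk⟩ := ih (by omega)
      by_cases h : Module.finrank ℝ (Submodule.span ℝ {v | v ∈ t.erase u ∧ m v = 0}) < 2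
      · obtain ⟨m', hm', hmu', hlt⟩ := exists_more_tight hS hm hmu h
        exact ⟨m', hm', hmu', by omega⟩
      · exact ⟨m, hm, hmu, by omega⟩
  obtain ⟨m, hm, hmu, h2⟩ := key 2 le_rfl
  refine ⟨m, hm, hmu, le_antisymm ?_ h2⟩
  have hlt : Submodule.span ℝ {v | v ∈ t.erase u ∧ m v = 0} < ⊤ := by
    refine lt_of_le_of_lt (b := LinearMap.ker m) (Submodule.span_le.2 fun v hv => hv.2) ?_
    refine lt_top_iff_ne_top.2 fun h => hmu.ne ?_
    rw [LinearMap.ker_eq_top.1 h, LinearMap.zero_apply]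
  have := Submodule.finrank_lt hlt.ne
  simp at this
  omega

/-- When the other generators still span `ℝ³`, the facet seen from `u` exists and is unique, and
all other facets are seen strictly from beneath. -/
lemma exists_unique_visible_facet {t : Finset (V 3)} (ht : IsExposedSet t) {u : V 3} (hu : u ∈ t)
    (hd : dimCone (coneOf (t.erase u)) = 3) :
    ∃ η, IsFacetOf η (coneOf (t.erase u)) ∧
      (∀ x ∈ rayGen u, x ≠ 0 → Beyond (coneOf (t.erase u)) η x) ∧
      (∀ η', IsFacetOf η' (coneOf (t.erase u)) → η' ≠ η →
        ∀ x ∈ rayGen u, x ≠ 0 → Beneath (coneOf (t.erase u)) η' x) := by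
  have hS : Submodule.span ℝ ((t.erase u : Finset (V 3)) : Set (V 3)) = ⊤ := by
    apply Submodule.eq_top_of_finrank_eq
    rw [← span_coneOf, ← dimCone, hd]
    simp
  obtain ⟨m, hm, hmu, hm2⟩ := exists_facet_functional ht hu hS
  obtain ⟨a, ⟨haS, hma⟩, b, ⟨hbS, hmb⟩, hab⟩ := exists_pair_of_finrank_span_eq_two hm2
  obtain ⟨hau, hat⟩ := Finset.mem_erase.1 haS
  obtain ⟨hbu, hbt⟩ := Finset.mem_erase.1 hbS
  -- signs at a nonzero point of the ray are signs at `u`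
  have hray : ∀ x ∈ rayGen u, x ≠ 0 → ∃ c : ℝ, 0 < c ∧ x = c • u := by
    rintro x ⟨c, hc, rfl⟩ hx
    exact ⟨c, hc.lt_of_ne (by rintro rfl; simp at hx), rfl⟩
  refine ⟨{x ∈ coneOf (t.erase u) | m x = 0}, ⟨⟨m, nonneg_on_coneOf hm, rfl⟩, ?_⟩, ?_, ?_⟩
  · rw [hd, dimCone, span_face hm, hm2]
  · intro x hx hx0 m' hm' heq
    obtain ⟨c, hc, rfl⟩ := hray x hx hx0
    rw [map_smul, smul_eq_mul]
    refine mul_neg_of_pos_of_neg hc ?_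
    by_contra! hmu'
    have hmem : ∀ v ∈ t.erase u, m v = 0 ↔ m' v = 0 := fun v hv => by
      have := Set.ext_iff.1 heq v
      have hv' := mem_coneOf_of_mem hv
      exact ⟨fun h => (this.1 ⟨hv', h⟩).2, fun h => (this.2 ⟨hv', h⟩).2⟩
    have hprop : m' = (m' u / m u) • m := by
      apply functional_ext hmu.ne hma hmb hab
      · simp [hmu.ne]
      · simp [hma, (hmem a haS).1 hma]
      · simp [hmb, (hmem b hbS).1 hmb]
    have hm0 : m = 0 := by
      refine LinearMap.ext_on hS fun v hv => (hmem v hv).2 (le_antisymm ?_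
        (hm' v (mem_coneOf_of_mem hv)))
      rw [hprop]
      exact mul_nonpos_of_nonpos_of_nonneg (div_nonpos_of_nonneg_of_nonpos hmu' hmu.le) (hm v hv)
    simp [hm0] at hmu
  · rintro η' ⟨-, hdη'⟩ hne x hx hx0 m' hm' rfl
    obtain ⟨c, hc, rfl⟩ := hray x hx hx0
    rw [map_smul, smul_eq_mul]
    refine mul_pos hc ?_
    by_contra! hmu'
    have hm'S : ∀ v ∈ t.erase u, 0 ≤ m' v := fun v hv => hm' v (mem_coneOf_of_mem hv)
    have hm'0 : m' ≠ 0 := by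
      rintro rfl
      simp [hd] at hdη'
    obtain ⟨p, k, hp, hk, hdec⟩ := exists_decomposition ht hu hat hbt hau hbu hab hmu hma hmb hmu'
      (hm'S a haS) (hm'S b hbS) hm'0
    have hsub : {x ∈ coneOf (t.erase u) | m' x = 0} ⊆ {x ∈ coneOf (t.erase u) | m x = 0} := by
      rintro y ⟨hy, hy0⟩
      refine ⟨hy, ?_⟩
      have h1 := nonneg_on_coneOf (fun v hv => hp v (Finset.mem_of_mem_erase hv)) y hy
      have h2 := nonneg_on_coneOf hm y hy
      rw [hdec] at hy0
      simp only [LinearMap.add_apply, LinearMap.smul_apply, smul_eq_mul] at hy0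
      have h3 : k * m y = 0 := by nlinarith [mul_nonneg hk.le h2]
      exact (mul_eq_zero.1 h3).resolve_left hk.ne'
    -- both faces are two-dimensional, so the inclusion is an equality
    have hspan := Submodule.eq_of_le_of_finrank_eq (Submodule.span_mono (R := ℝ) hsub) (by
      rw [span_face hm, hm2]
      rw [hd] at hdη'
      exact hdη')
    refine hne (Set.Subset.antisymm hsub fun y hy => ⟨hy.1, ?_⟩)
    have hle : Submodule.span ℝ {x ∈ coneOf (t.erase u) | m' x = 0} ≤ LinearMap.ker m' :=
      Submodule.span_le.2 fun z hz => hz.2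
    exact hle (hspan ▸ Submodule.subset_span hy)

end Space

/-!
STATEMENT 8: Every ray of a 3-dimensional strictly convex polyhedral cone
`σ ⊆ ℝ³` makes `σ` a pyramidal extension of `σ'` (the cone generated by the
other rays of `σ`) by that ray.  In particular, in any fan in `ℝ³` every ray is
in Egyptian position.
-/

theorem stmt_8 (σ ρ : Set (V 3))
    (hpoly : IsPolyhedralCone σ) (hconv : IsStrictlyConvexCone σ)
    (hdim : dimCone σ = 3)
    (hρ : ρ ∈ raysOf σ) :
    IsPyramidalExtensionBy σ ρ := by
  obtain ⟨t, rfl, ht⟩ := exists_exposedSet hpoly hconv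
  obtain ⟨u, hu, rfl⟩ := exists_eq_rayGen ht hρ
  rw [IsPyramidalExtensionBy, primeCone_eq ht hu]
  have hle : dimCone (coneOf (t.erase u)) ≤ 3 :=
    (Submodule.finrank_le _).trans_eq (by simp)
  -- removing a single generator lowers the dimension by at most one
  have hge : 3 ≤ dimCone (coneOf (t.erase u)) + 1 := by
    have h1 := Submodule.finrank_add_le_finrank_add_finrank
      (Submodule.span ℝ {u}) (Submodule.span ℝ ((t.erase u : Finset (V 3)) : Set (V 3)))
    rw [← Submodule.span_union, ← Set.insert_eq, ← Finset.coe_insert, Finset.insert_erase hu,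
      finrank_span_singleton (ht u hu).1, ← span_coneOf, ← span_coneOf] at h1
    rw [dimCone] at hdim ⊢
    omega
  rcases hle.lt_or_eq with h | h
  · left
    omega
  · exact Or.inr ⟨h, exists_unique_visible_facet ht hu h⟩
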